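/- arXiv:1610.07342 — 3 statements merged into one kernel-verified Lean document; each statement's English description precedes it below -/
import Mathlib

section
/- Write U_j = u_j² + 1. The flow u_{n,τ} = g_n with g_0 = U_0·( u_4√U_3·U_2·√U_1 − √U_{−1}·U_{−2}·√U_{−3}·u_{−4} + u_2u_1√U_1·( u_3√U_2 + √U_0·u_{−1} ) − √U_{−1}·u_{−1}u_{−2}·( u_1√U_0 + √U_{−2}·u_{−3} ) + u_0·( u_2²U_1 − U_{−1}u_{−2}² ) ) is a generalized symmetry of equation (E17), u̇_n = f_n with f_0 = (u_0²+1)·( u_2√(u_1²+1) − u_{−2}√(u_{−1}²+1) ); i.e. Σ_{k=−4}^{4} f_k · ∂g_0/∂u_k = Σ_{k=−2}^{2} g_k · ∂f_0/∂u_k holds identically in u_{−6},…,u_6. -/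
/-!
Put `w_j = √(u_j² + 1)`. Both right-hand sides are then polynomials in the `u_j` and `w_j`, and each
partial derivative acts as a derivation with `∂w_k/∂u_k = u_k / w_k`. Since `f_k` and `g_k` carry the
factor `u_k² + 1 = w_k²`, the products `f_k · ∂g_0/∂u_k` and `g_k · ∂f_0/∂u_k` involve only
`w_k² · ∂/∂u_k`, which maps polynomials to polynomials; `sq_root_mul_pd` and `sq_root_mul_pd_zero`
compute it on the shapes that occur. The compatibility condition thereby becomes a polynomial
identity modulo the relations `w_j² = u_j² + 1`, and after writing every `U_j` as `w_j²` only twenty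
monomials survive, which cancel by nine instances of these relations.
-/

open Finset

noncomputable section

/-- The shift operator: `(shift s u) j = u (j + s)`, so that for a lattice
function `F`, `(T^s F) u = F (shift s u)`. -/
def shift (s : ℤ) (u : ℤ → ℝ) : ℤ → ℝ := fun j => u (j + s)

/-- Partial derivative of a lattice function `φ` with respect to the lattice
variable `u_k`, evaluated at the sequence `u`. -/
def pd (φ : (ℤ → ℝ) → ℝ) (k : ℤ) (u : ℤ → ℝ) : ℝ :=
  deriv (fun x => φ (Function.update u k x)) (u k)

/-- `φ` is a smooth function of the lattice variables `u_p, …, u_q` (q ≤ p):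
it factors through a smooth function of the `p - q + 1` variables
`u_q, u_{q+1}, …, u_p`. -/
def SmoothWindow (q p : ℤ) (φ : (ℤ → ℝ) → ℝ) : Prop :=
  ∃ Φ : (Fin ((p - q).toNat + 1) → ℝ) → ℝ, ContDiff ℝ (⊤ : ℕ∞) Φ ∧
    ∀ u : ℤ → ℝ, φ u = Φ (fun i => u (q + (i.val : ℤ)))

/-- The compatibility condition stating that the flow `u_{n,τ} = g_n` is a
generalized symmetry of the equation `u̇_n = f_n`:
`Σ_{k=-4}^{4} f_k ∂g_0/∂u_k = Σ_{k=-2}^{2} g_k ∂f_0/∂u_k` identically on `dom`. -/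
def IsGenSymmetry (f g : (ℤ → ℝ) → ℝ) (dom : (ℤ → ℝ) → Prop) : Prop :=
  ∀ u : ℤ → ℝ, dom u →
    (∑ k ∈ Finset.Icc (-4 : ℤ) 4, f (shift k u) * pd g k u) =
      ∑ k ∈ Finset.Icc (-2 : ℤ) 2, g (shift k u) * pd f k u

/-- `U_j = u_j² + 1`. -/
def USq (u : ℤ → ℝ) (j : ℤ) : ℝ := (u j) ^ 2 + 1

/-- Right-hand side of (E17). -/
def fE17 (u : ℤ → ℝ) : ℝ :=
  ((u 0) ^ 2 + 1) * (u 2 * Real.sqrt ((u 1) ^ 2 + 1)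
    - u (-2) * Real.sqrt ((u (-1)) ^ 2 + 1))

/-- Generalized symmetry of (E17). -/
def gE17 (u : ℤ → ℝ) : ℝ :=
  USq u 0 *
    (u 4 * Real.sqrt (USq u 3) * USq u 2 * Real.sqrt (USq u 1)
      - Real.sqrt (USq u (-1)) * USq u (-2) * Real.sqrt (USq u (-3)) * u (-4)
      + u 2 * u 1 * Real.sqrt (USq u 1) *
          (u 3 * Real.sqrt (USq u 2) + Real.sqrt (USq u 0) * u (-1))
      - Real.sqrt (USq u (-1)) * u (-1) * u (-2) *
          (u 1 * Real.sqrt (USq u 0) + Real.sqrt (USq u (-2)) * u (-3))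
      + u 0 * ((u 2) ^ 2 * USq u 1 - USq u (-1) * (u (-2)) ^ 2))

/-- The square root `w_j = √(u_j² + 1)`. -/
def root (u : ℤ → ℝ) (j : ℤ) : ℝ := Real.sqrt ((u j) ^ 2 + 1)

lemma root_sq (u : ℤ → ℝ) (j : ℤ) : root u j ^ 2 = u j ^ 2 + 1 :=
  Real.sq_sqrt (by positivity)

lemma root_pos (u : ℤ → ℝ) (j : ℤ) : 0 < root u j :=
  Real.sqrt_pos.2 (by positivity)

lemma root_update_self (u : ℤ → ℝ) (k : ℤ) (x : ℝ) :
    root (Function.update u k x) k = Real.sqrt (x ^ 2 + 1) := by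
  simp [root]

lemma root_update_of_ne (u : ℤ → ℝ) {j k : ℤ} (h : j ≠ k) (x : ℝ) :
    root (Function.update u k x) j = root u j := by
  simp [root, Function.update_of_ne h]

lemma fE17_eq (u : ℤ → ℝ) :
    fE17 u = root u 0 ^ 2 * (u 2 * root u 1 - u (-2) * root u (-1)) := by
  rw [root_sq]; rfl

lemma gE17_eq (u : ℤ → ℝ) :
    gE17 u = root u 0 ^ 2 * (u 4 * root u 3 * root u 2 ^ 2 * root u 1
        - root u (-1) * root u (-2) ^ 2 * root u (-3) * u (-4)
        + u 2 * u 1 * root u 1 * (u 3 * root u 2 + root u 0 * u (-1))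
        - root u (-1) * u (-1) * u (-2) * (u 1 * root u 0 + root u (-2) * u (-3))
        + u 0 * (u 2 ^ 2 * root u 1 ^ 2 - root u (-1) ^ 2 * u (-2) ^ 2)) := by
  simp only [root_sq]; rfl

lemma fE17_shift (u : ℤ → ℝ) (k : ℤ) :
    fE17 (shift k u) = root u k ^ 2 *
      (u (2 + k) * root u (1 + k) - u (-2 + k) * root u (-1 + k)) := by
  simp [fE17_eq, shift, root]

lemma gE17_shift (u : ℤ → ℝ) (k : ℤ) :
    gE17 (shift k u) = root u k ^ 2 * (u (4 + k) * root u (3 + k) * root u (2 + k) ^ 2 * root u (1 + k)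
        - root u (-1 + k) * root u (-2 + k) ^ 2 * root u (-3 + k) * u (-4 + k)
        + u (2 + k) * u (1 + k) * root u (1 + k) * (u (3 + k) * root u (2 + k) + root u k * u (-1 + k))
        - root u (-1 + k) * u (-1 + k) * u (-2 + k) * (u (1 + k) * root u k + root u (-2 + k) * u (-3 + k))
        + u k * (u (2 + k) ^ 2 * root u (1 + k) ^ 2 - root u (-1 + k) ^ 2 * u (-2 + k) ^ 2)) := by
  simp [gE17_eq, shift, root]

lemma hasDerivAt_sqrt_sq_add_one (x : ℝ) :
    HasDerivAt (fun y : ℝ => Real.sqrt (y ^ 2 + 1)) (x / Real.sqrt (x ^ 2 + 1)) x := by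
  have h := ((hasDerivAt_pow 2 x).add_const 1).sqrt (by positivity)
  convert h using 1
  have : Real.sqrt (x ^ 2 + 1) ≠ 0 := by positivity
  field_simp
  norm_num
  ring

lemma sq_sqrt_sq_add_one (x : ℝ) : Real.sqrt (x ^ 2 + 1) ^ 2 = x ^ 2 + 1 :=
  Real.sq_sqrt (by positivity)

/-- `w_k² · ∂φ/∂u_k` for `φ = const + a₁ u_k + a₂ (u_k² + 1) + (b₀ + b₁ u_k) w_k`. The hypothesis is
stated for the increment of `φ`, so that the constant term need not be named; there `u_k² + 1` at the
base point is written `w_k²`. -/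
lemma sq_root_mul_pd {φ : (ℤ → ℝ) → ℝ} {u : ℤ → ℝ} {k : ℤ} (a₁ a₂ b₀ b₁ : ℝ)
    (h : ∀ x, φ (Function.update u k x) = φ u + (a₁ * (x - u k) + a₂ * (x ^ 2 + 1 - root u k ^ 2)
      + (b₀ + b₁ * x) * Real.sqrt (x ^ 2 + 1) - (b₀ + b₁ * u k) * root u k)) :
    root u k ^ 2 * pd φ k u =
      root u k ^ 2 * (a₁ + 2 * a₂ * u k + b₁ * root u k) + (b₀ + b₁ * u k) * u k * root u k := by
  have hx := hasDerivAt_id' (u k)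
  have hd := (((((hx.sub_const (u k)).const_mul a₁).add
    ((((hx.pow 2).add_const 1).sub_const (root u k ^ 2)).const_mul a₂)).add
    (((hx.const_mul b₁).const_add b₀).mul (hasDerivAt_sqrt_sq_add_one (u k)))).sub_const
      ((b₀ + b₁ * u k) * root u k)).const_add (φ u)
  have hw := (root_pos u k).ne'
  rw [pd, funext h]
  erw [hd.deriv]
  change root u k ^ 2 * (_ + (_ * root u k + _ * (u k / root u k))) = _
  field_simp
  norm_num
  ring

/-- `w_k² · ∂φ/∂u_k` for `φ = (u_k² + 1)(a + b u_k + c w_k)`. -/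
lemma sq_root_mul_pd_zero {φ : (ℤ → ℝ) → ℝ} {u : ℤ → ℝ} {k : ℤ} (a b c : ℝ)
    (h : ∀ x, φ (Function.update u k x) =
      (x ^ 2 + 1) * (a + b * x + c * Real.sqrt (x ^ 2 + 1))) :
    root u k ^ 2 * pd φ k u =
      root u k ^ 2 * (2 * u k * (a + b * u k + c * root u k) + b * root u k ^ 2
        + c * u k * root u k) := by
  have hx := hasDerivAt_id' (u k)
  have hd := ((hx.pow 2).add_const 1).mul
    (((hx.const_mul b).const_add a).add ((hasDerivAt_sqrt_sq_add_one (u k)).const_mul c))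
  have hw := (root_pos u k).ne'
  rw [pd, funext h]
  erw [hd.deriv]
  change root u k ^ 2 * (_ * (_ + c * root u k) + (u k ^ 2 + 1) * (_ + c * (u k / root u k))) = _
  rw [← root_sq]
  field_simp
  norm_num
  ring

/-- the flow `gE17` is a generalized symmetry of (E17). -/
theorem E17_gen_symmetry : IsGenSymmetry fE17 gE17 (fun _ => True) := by
  intro u _
  have hg_m4 := sq_root_mul_pd (φ := gE17) (u := u) (k := -4)
    (-(root u 0 ^ 2 * root u (-3) * root u (-2) ^ 2 * root u (-1)))
    0
    0
    0
    (by intro x; simp [gE17_eq, root_update_of_ne]; ring)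
  have hg_m3 := sq_root_mul_pd (φ := gE17) (u := u) (k := -3)
    (-(root u 0 ^ 2 * u (-2) * u (-1) * root u (-1) * root u (-2)))
    0
    (-(root u 0 ^ 2 * u (-4) * root u (-2) ^ 2 * root u (-1)))
    0
    (by intro x; simp [gE17_eq, root_update_of_ne, root_update_self]; ring)
  have hg_m2 := sq_root_mul_pd (φ := gE17) (u := u) (k := -2)
    (-(root u 0 ^ 2 * u (-1) * root u (-1) * root u 0 * u 1))
    (-(root u 0 ^ 2 * (u (-4) * root u (-3) * root u (-1) + u 0 * root u (-1) ^ 2)))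
    0
    (-(root u 0 ^ 2 * u (-1) * root u (-1) * u (-3)))
    (by
        intro x
        simp [gE17_eq, root_update_of_ne, root_update_self, sq_sqrt_sq_add_one]
        linear_combination -(root u 0 ^ 2 * u 0 * root u (-1) ^ 2) * root_sq u (-2))
  have hg_m1 := sq_root_mul_pd (φ := gE17) (u := u) (k := -1)
    (root u 0 ^ 2 * root u 1 * u 1 * u 2 * root u 0)
    (-(root u 0 ^ 2 * u 0 * u (-2) ^ 2))
    (-(root u 0 ^ 2 * u (-4) * root u (-3) * root u (-2) ^ 2))
    (-(root u 0 ^ 2 * u (-2) * (u (-3) * root u (-2) + root u 0 * u 1)))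
    (by intro x; simp [gE17_eq, root_update_of_ne, root_update_self, sq_sqrt_sq_add_one]; ring)
  have hg_p1 := sq_root_mul_pd (φ := gE17) (u := u) (k := 1)
    (-(root u 0 ^ 2 * root u (-1) * u (-1) * u (-2) * root u 0))
    (root u 0 ^ 2 * u 0 * u 2 ^ 2)
    (root u 0 ^ 2 * u 4 * root u 3 * root u 2 ^ 2)
    (root u 0 ^ 2 * u 2 * (u 3 * root u 2 + root u 0 * u (-1)))
    (by intro x; simp [gE17_eq, root_update_of_ne, root_update_self, sq_sqrt_sq_add_one]; ring)
  have hg_p2 := sq_root_mul_pd (φ := gE17) (u := u) (k := 2)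
    (root u 0 ^ 2 * u 1 * root u 1 * root u 0 * u (-1))
    (root u 0 ^ 2 * (u 4 * root u 3 * root u 1 + u 0 * root u 1 ^ 2))
    0
    (root u 0 ^ 2 * u 1 * root u 1 * u 3)
    (by
        intro x
        simp [gE17_eq, root_update_of_ne, root_update_self, sq_sqrt_sq_add_one]
        linear_combination (root u 0 ^ 2 * u 0 * root u 1 ^ 2) * root_sq u 2)
  have hg_p3 := sq_root_mul_pd (φ := gE17) (u := u) (k := 3)
    (root u 0 ^ 2 * u 2 * u 1 * root u 1 * root u 2)
    0
    (root u 0 ^ 2 * u 4 * root u 2 ^ 2 * root u 1)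
    0
    (by intro x; simp [gE17_eq, root_update_of_ne, root_update_self]; ring)
  have hg_p4 := sq_root_mul_pd (φ := gE17) (u := u) (k := 4)
    (root u 0 ^ 2 * root u 3 * root u 2 ^ 2 * root u 1)
    0
    0
    0
    (by intro x; simp [gE17_eq, root_update_of_ne]; ring)
  have hg_p0 := sq_root_mul_pd_zero (φ := gE17) (u := u) (k := 0)
    (u 4 * root u 3 * root u 2 ^ 2 * root u 1
      - root u (-1) * root u (-2) ^ 2 * root u (-3) * u (-4)
      + u 2 * u 1 * root u 1 * u 3 * root u 2
      - root u (-1) * u (-1) * u (-2) * root u (-2) * u (-3))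
    (u 2 ^ 2 * root u 1 ^ 2 - root u (-1) ^ 2 * u (-2) ^ 2)
    (u 2 * u 1 * root u 1 * u (-1) - root u (-1) * u (-1) * u (-2) * u 1)
    (by intro x; simp [gE17_eq, root_update_of_ne, root_update_self, sq_sqrt_sq_add_one,
      -mul_eq_mul_left_iff]; ring)
  have hf_m2 := sq_root_mul_pd (φ := fE17) (u := u) (k := -2)
    (-(root u 0 ^ 2 * root u (-1))) 0 0 0
    (by intro x; simp [fE17_eq, root_update_of_ne]; ring)
  have hf_m1 := sq_root_mul_pd (φ := fE17) (u := u) (k := -1)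
    0 0 (-(root u 0 ^ 2 * u (-2))) 0
    (by intro x; simp [fE17_eq, root_update_of_ne, root_update_self]; ring)
  have hf_p1 := sq_root_mul_pd (φ := fE17) (u := u) (k := 1)
    0 0 (root u 0 ^ 2 * u 2) 0
    (by intro x; simp [fE17_eq, root_update_of_ne, root_update_self]; ring)
  have hf_p2 := sq_root_mul_pd (φ := fE17) (u := u) (k := 2)
    (root u 0 ^ 2 * root u 1) 0 0 0
    (by intro x; simp [fE17_eq, root_update_of_ne]; ring)
  have hf_p0 := sq_root_mul_pd_zero (φ := fE17) (u := u) (k := 0)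
    (u 2 * root u 1 - u (-2) * root u (-1)) 0 0
    (by intro x; simp [fE17_eq, root_update_of_ne, root_update_self, sq_sqrt_sq_add_one])
  have h9 : Finset.Icc (-4 : ℤ) 4 = {-4, -3, -2, -1, 0, 1, 2, 3, 4} := by decide
  have h5 : Finset.Icc (-2 : ℤ) 2 = {-2, -1, 0, 1, 2} := by decide
  rw [h9, h5]
  simp [Finset.sum_insert, fE17_shift, gE17_shift, -mul_eq_mul_left_iff]
  -- With `w_j` in place of `root u j` the goal is polynomial in `u_j`, `w_j` and the derivatives.
  set w := root u with hw
  have hr : ∀ j, w j ^ 2 - u j ^ 2 - 1 = 0 := fun j => by rw [hw, root_sq]; ring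
  -- The first nine terms substitute `w_k² ∂g_0/∂u_k`, the next five `w_k² ∂f_0/∂u_k`; the rest
  -- reduces the remaining twenty monomials by eliminating every `u_j²` in favour of `w_j² - 1`.
  linear_combination
    (u (-2) * w (-3) - u (-6) * w (-5)) * hg_m4
    + (u (-1) * w (-2) - u (-5) * w (-4)) * hg_m3
    + (u 0 * w (-1) - u (-4) * w (-3)) * hg_m2
    + (u 1 * w 0 - u (-3) * w (-2)) * hg_m1
    + (u 2 * w 1 - u (-2) * w (-1)) * hg_p0
    + (u 3 * w 2 - u (-1) * w 0) * hg_p1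
    + (u 4 * w 3 - u 0 * w 1) * hg_p2
    + (u 5 * w 4 - u 1 * w 2) * hg_p3
    + (u 6 * w 5 - u 2 * w 3) * hg_p4
    - (u 2 * w 1 * w 0 ^ 2 * w (-1)
        - w (-3) * w (-4) ^ 2 * w (-5) * u (-6)
        + u 0 * u (-1) * w (-1) * (u 1 * w 0 + w (-2) * u (-3))
        - w (-3) * u (-3) * u (-4) * (u (-1) * w (-2) + w (-4) * u (-5))
        + u (-2) * (u 0 ^ 2 * w (-1) ^ 2 - w (-3) ^ 2 * u (-4) ^ 2)) * hf_m2
    - (u 3 * w 2 * w 1 ^ 2 * w 0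
        - w (-2) * w (-3) ^ 2 * w (-4) * u (-5)
        + u 1 * u 0 * w 0 * (u 2 * w 1 + w (-1) * u (-2))
        - w (-2) * u (-2) * u (-3) * (u 0 * w (-1) + w (-3) * u (-4))
        + u (-1) * (u 1 ^ 2 * w 0 ^ 2 - w (-2) ^ 2 * u (-3) ^ 2)) * hf_m1
    - (u 4 * w 3 * w 2 ^ 2 * w 1
        - w (-1) * w (-2) ^ 2 * w (-3) * u (-4)
        + u 2 * u 1 * w 1 * (u 3 * w 2 + w 0 * u (-1))
        - w (-1) * u (-1) * u (-2) * (u 1 * w 0 + w (-2) * u (-3))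
        + u 0 * (u 2 ^ 2 * w 1 ^ 2 - w (-1) ^ 2 * u (-2) ^ 2)) * hf_p0
    - (u 5 * w 4 * w 3 ^ 2 * w 2
        - w 0 * w (-1) ^ 2 * w (-2) * u (-3)
        + u 3 * u 2 * w 2 * (u 4 * w 3 + w 1 * u 0)
        - w 0 * u 0 * u (-1) * (u 2 * w 1 + w (-1) * u (-2))
        + u 1 * (u 3 ^ 2 * w 2 ^ 2 - w 0 ^ 2 * u (-1) ^ 2)) * hf_p1
    - (u 6 * w 5 * w 4 ^ 2 * w 3
        - w 1 * w 0 ^ 2 * w (-1) * u (-2)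
        + u 4 * u 3 * w 3 * (u 5 * w 4 + w 2 * u 1)
        - w 1 * u 1 * u 0 * (u 3 * w 2 + w 0 * u (-1))
        + u 2 * (u 4 ^ 2 * w 3 ^ 2 - w 1 ^ 2 * u 0 ^ 2)) * hf_p2
    + (- u (-2) * w (-3) ^ 2 * w (-2) ^ 2 * w (-1) * w 0 ^ 2)
      * hr (-4)
    + (- u (-2) * w (-2) ^ 2 * w (-1) ^ 3 * w 0 ^ 2)
      * hr (-3)
    + (u 2 * w (-1) ^ 2 * w 0 ^ 4 * w 1 - u (-2) * w (-1) ^ 3 * w 0 ^ 4)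
      * hr (-2)
    + (u (-2) * w (-3) ^ 2 * w (-2) ^ 2 * w (-1) * w 0 ^ 2 + u 2 * w 0 ^ 4 * w 1 ^ 3 - u (-2) * w (-1) * w 0 ^ 4 * w 1 ^ 2)
      * hr (-1)
    + (u (-2) * w (-2) ^ 2 * w (-1) ^ 3 * w 0 ^ 2 + u 2 * w 0 ^ 2 * w 1 ^ 3 * w 2 ^ 2)
      * hr 0
    + (- u 2 * w (-1) ^ 2 * w 0 ^ 4 * w 1 + u (-2) * w (-1) ^ 3 * w 0 ^ 4 + u 2 * w 0 ^ 2 * w 1 * w 2 ^ 2 * w 3 ^ 2)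
      * hr 1
    + (- u 2 * w 0 ^ 4 * w 1 ^ 3 + u (-2) * w (-1) * w 0 ^ 4 * w 1 ^ 2)
      * hr 2
    + (- u 2 * w 0 ^ 2 * w 1 ^ 3 * w 2 ^ 2)
      * hr 3
    + (- u 2 * w 0 ^ 2 * w 1 * w 2 ^ 2 * w 3 ^ 2)
      * hr 4
end
end

section
/- (Transformation T2 from (E11) to (E10)) Let a, b be real constants and let u_n : I → ℝ (n ∈ ℤ, I ⊆ ℝ an open interval) be differentiable functions satisfying equation (E11): u̇_n = (u_{n+2}−u_{n+1}+a)(u_n−u_{n−1}+a) + (u_{n+1}−u_n+a)(u_{n−1}−u_{n−2}+a) + (u_{n+1}−u_n+a)(u_n−u_{n−1}+a) + b for all n ∈ ℤ and t ∈ I. Then the functions û_n = u_{n+1} − u_n + a satisfy the Itoh–Narita–Bogoyavlensky equation (E10): û̇_n = û_n( û_{n+2} + û_{n+1} − û_{n−1} − û_{n−2} ) for all n ∈ ℤ and t ∈ I. -/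
/-- Transformation T2, from (E11) to (E10): if the family of
differentiable functions `u_n : I → ℝ` (with `I = (α,β)` an open interval)
solves equation (E11), then `û_n = u_{n+1} - u_n + a` solves the
Itoh–Narita–Bogoyavlensky equation (E10). -/
theorem transformation_E11_to_INB
    (a b : ℝ) (α β : ℝ) (u : ℤ → ℝ → ℝ)
    (hdiff : ∀ n : ℤ, ∀ t ∈ Set.Ioo α β, DifferentiableAt ℝ (u n) t)
    (heq : ∀ n : ℤ, ∀ t ∈ Set.Ioo α β,
      deriv (u n) t =
        (u (n + 2) t - u (n + 1) t + a) * (u n t - u (n - 1) t + a)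
          + (u (n + 1) t - u n t + a) * (u (n - 1) t - u (n - 2) t + a)
          + (u (n + 1) t - u n t + a) * (u n t - u (n - 1) t + a) + b) :
    ∀ n : ℤ, ∀ t ∈ Set.Ioo α β,
      deriv (fun s => u (n + 1) s - u n s + a) t =
        (u (n + 1) t - u n t + a) *
          ((u (n + 3) t - u (n + 2) t + a) + (u (n + 2) t - u (n + 1) t + a)
            - (u n t - u (n - 1) t + a) - (u (n - 1) t - u (n - 2) t + a)) := by
  intro n t ht
  -- With `v n = u (n+1) - u n + a`, the right-hand side of (E11) at `n` is
  -- `v (n+1) * v (n-1) + v n * v (n-2) + v n * v (n-1) + b`; subtracting it from its shift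
  -- cancels `v (n+1) * v (n-1)` and `b`, and every remaining term contains `v n`.
  rw [deriv_add_const, deriv_fun_sub (hdiff (n + 1) t ht) (hdiff n t ht),
    heq (n + 1) t ht, heq n t ht,
    show n + 1 + 2 = n + 3 by ring, show n + 1 + 1 = n + 2 by ring,
    show n + 1 - 1 = n by ring, show n + 1 - 2 = n - 1 by ring]
  ring
end

section
/- (Transformation T3 from the linear equation to (E9)) Let a ≠ 0 and c be real constants and let u_n : I → ℝ (n ∈ ℤ, I ⊆ ℝ an open interval) be differentiable functions with u_n(t) ≠ 0 for all n, t, satisfying the linear equation u̇_n = u_{n+2} − a² u_{n−2} + (c/2) u_n for all n ∈ ℤ and t ∈ I. Then the functions û_n = u_{n+1} u_n satisfy equation (E9): û̇_n = û_{n+2}û_n/û_{n+1} + û_{n+1} − a²( û_{n−1} + û_n û_{n−2}/û_{n−1} ) + c û_n for all n ∈ ℤ and t ∈ I. -/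
/-- Transformation T3, from the linear equation to (E9): if the
family of nowhere vanishing differentiable functions `u_n : I → ℝ` (with
`I = (α,β)` an open interval) solves the linear equation
`u̇_n = u_{n+2} - a² u_{n-2} + (c/2) u_n` (with `a ≠ 0`), then
`û_n = u_{n+1} u_n` solves equation (E9). -/
theorem transformation_linear_to_E9
    (a c : ℝ) (ha : a ≠ 0) (α β : ℝ) (u : ℤ → ℝ → ℝ)
    (hne : ∀ n : ℤ, ∀ t ∈ Set.Ioo α β, u n t ≠ 0)
    (hdiff : ∀ n : ℤ, ∀ t ∈ Set.Ioo α β, DifferentiableAt ℝ (u n) t)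
    (heq : ∀ n : ℤ, ∀ t ∈ Set.Ioo α β,
      deriv (u n) t = u (n + 2) t - a ^ 2 * u (n - 2) t + (c / 2) * u n t) :
    ∀ n : ℤ, ∀ t ∈ Set.Ioo α β,
      deriv (fun s => u (n + 1) s * u n s) t =
        (u (n + 3) t * u (n + 2) t) * (u (n + 1) t * u n t) / (u (n + 2) t * u (n + 1) t)
          + u (n + 2) t * u (n + 1) t
          - a ^ 2 * (u n t * u (n - 1) t
              + (u (n + 1) t * u n t) * (u (n - 1) t * u (n - 2) t) / (u n t * u (n - 1) t))
          + c * (u (n + 1) t * u n t) := by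
  intro n t ht
  have h2 := hne (n + 2) t ht
  have h1 := hne (n + 1) t ht
  have h0 := hne n t ht
  have hm1 := hne (n - 1) t ht
  -- the two quotients reduce to `u_{n+3} u_n` and `u_{n+1} u_{n-2}`
  have hq₁ : (u (n + 3) t * u (n + 2) t) * (u (n + 1) t * u n t) / (u (n + 2) t * u (n + 1) t)
      = u (n + 3) t * u n t := by
    field_simp
  have hq₂ : (u (n + 1) t * u n t) * (u (n - 1) t * u (n - 2) t) / (u n t * u (n - 1) t)
      = u (n + 1) t * u (n - 2) t := by
    field_simp
  rw [deriv_fun_mul (hdiff (n + 1) t ht) (hdiff n t ht), heq (n + 1) t ht, heq n t ht, hq₁, hq₂,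
    show n + 1 + 2 = n + 3 by ring, show n + 1 - 2 = n - 1 by ring]
  ring
end
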